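/- Let T > 0 and α > 0. Let u : ℝ² × [0,T] → ℝ², θ : ℝ² × [0,T] → ℝ, and p : ℝ² × [0,T] → ℝ be smooth functions, ℤ²-periodic in x, such that for every t the field u(·,t) is divergence-free, and pointwise on ℝ² × [0,T] they satisfy the inviscid non-diffusive Boussinesq–Voigt system: ∂_t(u − α²Δu) + (u·∇)u + ∇p = θ e₂ and ∂_t θ + u·∇θ = 0, with e₂ = (0,1). Then for every t ∈ [0,T]: ( ‖u(t)‖_{L²}² + α² ‖∇u(t)‖_{L²}² )^{1/2} ≤ ( ‖u(0)‖_{L²}² + α² ‖∇u(0)‖_{L²}² )^{1/2} + t ‖θ(0)‖_{L²}, where all norms are over Q = [0,1]². -/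

import Mathlib

/-!
Testing the momentum equation with `u` and integrating by parts over the period cell, the nonlinear
and pressure terms become integrals of divergences of periodic fields (because `div u = 0`) and
drop out, so `E = ‖u‖² + α² ‖∇u‖²` satisfies `E' = 2 ∫ f · u ≤ 2 ‖f‖ √E` for any force `f`, and `√E`
grows at most linearly with slope `sup ‖f‖`. For the buoyancy force `f = θ e` this slope is
`|e| ‖θ(0)‖`, since `‖θ‖` is conserved by divergence-free transport.
-/

open MeasureTheory

/-- Partial derivative in direction `j`. -/
noncomputable def pd (j : Fin 2) (f : (Fin 2 → ℝ) → ℝ) (x : Fin 2 → ℝ) : ℝ :=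
  fderiv ℝ f x (Pi.single j 1)

/-- `f` is `ℤ²`-periodic. -/
def Periodic2 (f : (Fin 2 → ℝ) → ℝ) : Prop :=
  ∀ (x : Fin 2 → ℝ) (k : Fin 2 → ℤ), f (x + fun i => (k i : ℝ)) = f x

/-- The fundamental domain `Q = [0,1]²`. -/
def Q2 : Set (Fin 2 → ℝ) := Set.Icc 0 1

/-- Laplacian of a scalar function. -/
noncomputable def lap (f : (Fin 2 → ℝ) → ℝ) (x : Fin 2 → ℝ) : ℝ :=
  ∑ j : Fin 2, pd j (pd j f) x

/-- Standard basis vector `e₂ = (0,1)`. -/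
noncomputable def e2 (i : Fin 2) : ℝ := if i = 1 then 1 else 0

open Function (uncurry)

section Analysis

lemma sqrt_le_add_mul_of_deriv_le {E E' : ℝ → ℝ} {a b c : ℝ} (hc : 0 ≤ c)
    (hE : ∀ t ∈ Set.Icc a b, HasDerivAt E (E' t) t)
    (hE' : ∀ t ∈ Set.Icc a b, E' t ≤ 2 * (c * √(E t))) {t : ℝ} (ht : t ∈ Set.Icc a b) :
    √(E t) ≤ √(E a) + (t - a) * c := by
  -- `√` is not differentiable at `0`, so `E` itself is compared with `s ↦ g ε s ^ 2`, whose
  -- derivative is strictly larger than `2 * (c * g ε s)`.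
  let g (ε s : ℝ) : ℝ := √(E a) + ε + (s - a) * (c + ε)
  have hbarrier (ε : ℝ) (hε : 0 < ε) : √(E t) ≤ g ε t := by
    have hg_pos {s : ℝ} (hs : a ≤ s) : 0 < g ε s := by
      have := mul_nonneg (sub_nonneg.2 hs) (add_nonneg hc hε.le)
      have := Real.sqrt_nonneg (E a)
      simp only [g]
      linarith
    have hg (s : ℝ) : HasDerivAt (fun s => g ε s ^ 2) (2 * g ε s * (c + ε)) s := by
      have := ((((hasDerivAt_id s).sub_const a).mul_const (c + ε)).const_add (√(E a) + ε)).fun_pow 2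
      simpa using this
    have hstart : E a ≤ g ε a ^ 2 :=
      (Real.sqrt_le_left (hg_pos le_rfl).le).1 (by simp only [g]; linarith)
    refine Real.sqrt_le_iff.2 ⟨(hg_pos ht.1).le, ?_⟩
    refine image_le_of_deriv_right_lt_deriv_boundary'
      (fun s hs => (hE s hs).continuousAt.continuousWithinAt)
      (fun s hs => (hE s (Set.Ico_subset_Icc_self hs)).hasDerivWithinAt) hstart
      (fun s _ => (hg s).continuousAt.continuousWithinAt) (fun s _ => (hg s).hasDerivWithinAt)
      (fun s hs hs_eq => ?_) ht
    have hs_pos := hg_pos hs.1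
    have hs_le := hE' s (Set.Ico_subset_Icc_self hs)
    rw [hs_eq, Real.sqrt_sq hs_pos.le] at hs_le
    nlinarith [mul_pos hs_pos hε]
  have hlim : Filter.Tendsto (fun ε => g ε t) (nhdsWithin 0 (Set.Ioi 0))
      (nhds (√(E a) + (t - a) * c)) := by
    have hcont : Continuous fun ε => g ε t := by fun_prop
    simpa [g] using (hcont.tendsto 0).mono_left nhdsWithin_le_nhds
  exact ge_of_tendsto hlim (eventually_nhdsWithin_of_forall hbarrier)

lemma integral_mul_le_sqrt_mul_sqrt {X : Type*} [MeasurableSpace X] {μ : Measure X} {f g : X → ℝ}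
    (hf : MemLp f 2 μ) (hg : MemLp g 2 μ) :
    ∫ x, f x * g x ∂μ ≤ √(∫ x, f x ^ 2 ∂μ) * √(∫ x, g x ^ 2 ∂μ) := by
  have holder := integral_mul_norm_le_Lp_mul_Lq (μ := μ) Real.HolderConjugate.two_two
    (by simpa using hf) (by simpa using hg)
  simp only [Real.norm_eq_abs, Real.rpow_two, sq_abs, ← Real.sqrt_eq_rpow, ← abs_mul] at holder
  exact (le_abs_self _).trans (abs_integral_le_integral_abs.trans holder)

lemma integral_sum_mul_le_sqrt_mul_sqrt {X ι : Type*} [MeasurableSpace X] [Fintype ι]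
    {μ : Measure X} {f g : ι → X → ℝ} (hf : ∀ i, MemLp (f i) 2 μ) (hg : ∀ i, MemLp (g i) 2 μ) :
    ∫ x, ∑ i, f i x * g i x ∂μ ≤ √(∫ x, ∑ i, f i x ^ 2 ∂μ) * √(∫ x, ∑ i, g i x ^ 2 ∂μ) := by
  have hfg (i : ι) : Integrable (fun x => f i x * g i x) μ := (hf i).integrable_mul (hg i)
  rw [integral_finsetSum _ fun i _ => hfg i,
    integral_finsetSum _ fun i _ => (hf i).integrable_sq,
    integral_finsetSum _ fun i _ => (hg i).integrable_sq]
  calc ∑ i, ∫ x, f i x * g i x ∂μ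
      ≤ ∑ i, √(∫ x, f i x ^ 2 ∂μ) * √(∫ x, g i x ^ 2 ∂μ) :=
        Finset.sum_le_sum fun i _ => integral_mul_le_sqrt_mul_sqrt (hf i) (hg i)
    _ ≤ √(∑ i, ∫ x, f i x ^ 2 ∂μ) * √(∑ i, ∫ x, g i x ^ 2 ∂μ) :=
        Real.sum_sqrt_mul_sqrt_le _ (fun i => integral_nonneg fun x => sq_nonneg _)
          (fun i => integral_nonneg fun x => sq_nonneg _)

lemma hasDerivAt_setIntegral_of_isCompact {X E : Type*} [TopologicalSpace X] [T2Space X]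
    [MeasurableSpace X] [OpensMeasurableSpace X] {μ : Measure X} [IsFiniteMeasureOnCompacts μ]
    [NormedAddCommGroup E] [NormedSpace ℝ E] {K : Set X} (hK : IsCompact K) {F F' : ℝ → X → E}
    (hF : ∀ s, Continuous (F s)) (hF' : Continuous (uncurry F'))
    (hderiv : ∀ s x, HasDerivAt (fun s => F s x) (F' s x) s) (t : ℝ) :
    HasDerivAt (fun s => ∫ x in K, F s x ∂μ) (∫ x in K, F' t x ∂μ) t := by
  have integrableOn {G : X → E} (hG : Continuous G) : IntegrableOn G K μ :=
    hG.continuousOn.integrableOn_compact hK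
  obtain ⟨C, hC⟩ := ((isCompact_closedBall t 1).prod hK).exists_bound_of_continuousOn
    hF'.continuousOn
  refine (hasDerivAt_integral_of_dominated_loc_of_deriv_le (bound := fun _ => C)
    (Metric.closedBall_mem_nhds t one_pos)
    (.of_forall fun s => (integrableOn (hF s)).aestronglyMeasurable) (integrableOn (hF t))
    (integrableOn (hF'.comp (.prodMk_right t))).aestronglyMeasurable ?_
    (continuousOn_const.integrableOn_compact hK) (.of_forall fun x s _ => hderiv s x)).2
  filter_upwards [ae_restrict_mem hK.measurableSet] with x hx s hs
  exact hC (s, x) ⟨hs, hx⟩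

end Analysis

section VectorCalculus

variable {d : ℕ} {f g : (Fin d → ℝ) → ℝ} {v : Fin d → (Fin d → ℝ) → ℝ}

/-- The partial derivative `∂ⱼ f` of a scalar field in any dimension; `pd` is the case `d = 2`. -/
noncomputable def partialDeriv (j : Fin d) (f : (Fin d → ℝ) → ℝ) (x : Fin d → ℝ) : ℝ :=
  fderiv ℝ f x (Pi.single j 1)

/-- The divergence of a vector field, which is given by its family of scalar components. -/
noncomputable def divergence (v : Fin d → (Fin d → ℝ) → ℝ) (x : Fin d → ℝ) : ℝ :=
  ∑ j, partialDeriv j (v j) x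

/-- The Laplacian of a scalar field in any dimension; `lap` is the case `d = 2`. -/
noncomputable def laplacian (f : (Fin d → ℝ) → ℝ) (x : Fin d → ℝ) : ℝ :=
  ∑ j, partialDeriv j (partialDeriv j f) x

/-- The advection term `(v · ∇) f`. -/
noncomputable def advection (v : Fin d → (Fin d → ℝ) → ℝ) (f : (Fin d → ℝ) → ℝ) (x : Fin d → ℝ) :
    ℝ :=
  ∑ j, v j x * partialDeriv j f x

/-- `ℤᵈ`-periodicity, encoded as periodicity along each of the standard basis vectors. -/
def UnitPeriodic (f : (Fin d → ℝ) → ℝ) : Prop :=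
  ∀ j : Fin d, Function.Periodic f (Pi.single j 1)

/-- The period cell `[0,1]ᵈ`. -/
def unitCube (d : ℕ) : Set (Fin d → ℝ) := Set.Icc 0 1

lemma isCompact_unitCube : IsCompact (unitCube d) := isCompact_Icc

lemma contDiff_partialDeriv {m n : WithTop ℕ∞} (hf : ContDiff ℝ m f) (hmn : n + 1 ≤ m) (j : Fin d) :
    ContDiff ℝ n (partialDeriv j f) :=
  (hf.fderiv_right hmn).clm_apply contDiff_const

lemma continuous_partialDeriv (hf : ContDiff ℝ 1 f) (j : Fin d) : Continuous (partialDeriv j f) :=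
  (contDiff_partialDeriv hf (zero_add 1).le j).continuous

lemma continuous_laplacian (hf : ContDiff ℝ 2 f) : Continuous (laplacian f) :=
  continuous_finsetSum _ fun j _ =>
    continuous_partialDeriv (contDiff_partialDeriv hf one_add_one_eq_two.le j) j

lemma continuous_advection (hv : ∀ i, Continuous (v i)) (hf : ContDiff ℝ 1 f) :
    Continuous (advection v f) :=
  continuous_finsetSum _ fun j _ => (hv j).mul (continuous_partialDeriv hf j)

lemma UnitPeriodic.mul (hf : UnitPeriodic f) (hg : UnitPeriodic g) :
    UnitPeriodic fun x => f x * g x :=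
  fun j => Function.Periodic.mul (hf j) (hg j)

lemma UnitPeriodic.partialDeriv (hf : UnitPeriodic f) (j : Fin d) :
    UnitPeriodic (partialDeriv j f) := by
  intro k x
  have h := fderiv_comp_add_right (𝕜 := ℝ) (f := f) (x := x) (Pi.single k 1)
  rw [funext (hf k)] at h
  simp only [_root_.partialDeriv, h]

lemma partialDeriv_mul {x : Fin d → ℝ} (hf : DifferentiableAt ℝ f x) (hg : DifferentiableAt ℝ g x)
    (j : Fin d) :
    partialDeriv j (fun y => f y * g y) x
      = f x * partialDeriv j g x + g x * partialDeriv j f x := by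
  simp [partialDeriv, fderiv_fun_mul hf hg]

lemma divergence_mul {x : Fin d → ℝ} (hv : ∀ j, DifferentiableAt ℝ (v j) x)
    (hf : DifferentiableAt ℝ f x) :
    divergence (fun j y => v j y * f y) x = advection v f x + f x * divergence v x := by
  simp only [divergence, advection, partialDeriv_mul (hv _) hf, Finset.sum_add_distrib,
    Finset.mul_sum]

lemma advection_mul_self {x : Fin d → ℝ} (hf : DifferentiableAt ℝ f x) :
    advection v (fun y => f y * f y) x = 2 * (f x * advection v f x) := by
  simp only [advection, partialDeriv_mul hf hf, Finset.mul_sum]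
  exact Finset.sum_congr rfl fun j _ => by ring

lemma divergence_mul_grad {x : Fin d → ℝ} (hf : DifferentiableAt ℝ f x)
    (hg : ∀ j, DifferentiableAt ℝ (partialDeriv j g) x) :
    divergence (fun j y => f y * partialDeriv j g y) x
      = f x * laplacian g x + ∑ j, partialDeriv j f x * partialDeriv j g x := by
  simp only [divergence, laplacian, partialDeriv_mul hf (hg _), Finset.sum_add_distrib,
    Finset.mul_sum, mul_comm (partialDeriv _ g x)]

end VectorCalculus

section PeriodCell

variable {d : ℕ} {f g p : (Fin d → ℝ) → ℝ} {v w : Fin d → (Fin d → ℝ) → ℝ}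

lemma integrableOn_unitCube (hf : Continuous f) : IntegrableOn f (unitCube d) :=
  hf.continuousOn.integrableOn_compact isCompact_unitCube

lemma memLp_two_unitCube (hf : Continuous f) : MemLp f 2 (volume.restrict (unitCube d)) :=
  (memLp_two_iff_integrable_sq hf.aestronglyMeasurable).2 (integrableOn_unitCube (hf.pow 2))

lemma integral_divergence_eq_zero (hv : ∀ j, ContDiff ℝ 1 (v j))
    (hper : ∀ j, UnitPeriodic (v j)) : ∫ x in unitCube d, divergence v x = 0 := by
  cases d with
  | zero => simp [divergence]
  | succ n =>
    refine (integral_divergence_of_hasFDerivAt_off_countable' (0 : Fin (n + 1) → ℝ) 1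
      zero_le_one v (fun j x => fderiv ℝ (v j) x) ∅ Set.countable_empty
      (fun j => (hv j).continuous.continuousOn)
      (fun x _ j => ((hv j).differentiable one_ne_zero x).hasFDerivAt)
      (integrableOn_unitCube (continuous_finsetSum _ fun j _ =>
        continuous_partialDeriv (hv j) j))).trans (Finset.sum_eq_zero fun j _ => ?_)
    have opposite_faces (y : Fin n → ℝ) : (j.insertNth 1 y : Fin (n + 1) → ℝ)
        = j.insertNth 0 y + Pi.single j 1 := by
      ext k
      refine Fin.succAboveCases j ?_ (fun l => ?_) k <;> simp [Fin.succAbove_ne]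
    simp only [Pi.zero_apply, Pi.one_apply, opposite_faces, hper j j _, sub_self]

lemma integral_advection_eq_zero (hv : ∀ j, ContDiff ℝ 1 (v j)) (hvper : ∀ j, UnitPeriodic (v j))
    (hdiv : ∀ x, divergence v x = 0) (hf : ContDiff ℝ 1 f) (hfper : UnitPeriodic f) :
    ∫ x in unitCube d, advection v f x = 0 := by
  rw [← integral_divergence_eq_zero (fun j => (hv j).mul hf) (fun j => (hvper j).mul hfper)]
  congr with x
  rw [divergence_mul (fun j => (hv j).differentiable one_ne_zero x)
    (hf.differentiable one_ne_zero x), hdiv, mul_zero, add_zero]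

lemma integral_mul_advection_self_eq_zero (hv : ∀ j, ContDiff ℝ 1 (v j))
    (hvper : ∀ j, UnitPeriodic (v j)) (hdiv : ∀ x, divergence v x = 0) (hf : ContDiff ℝ 1 f)
    (hfper : UnitPeriodic f) : ∫ x in unitCube d, f x * advection v f x = 0 := by
  have h := integral_advection_eq_zero hv hvper hdiv (hf.mul hf) (hfper.mul hfper)
  simp only [advection_mul_self (hf.differentiable one_ne_zero _), integral_const_mul] at h
  exact (mul_eq_zero_iff_left two_ne_zero).1 h

lemma integral_mul_laplacian (hf : ContDiff ℝ 1 f) (hfper : UnitPeriodic f) (hg : ContDiff ℝ 2 g)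
    (hgper : UnitPeriodic g) :
    ∫ x in unitCube d, f x * laplacian g x
      = -∫ x in unitCube d, ∑ j, partialDeriv j f x * partialDeriv j g x := by
  have hg' (j : Fin d) : ContDiff ℝ 1 (partialDeriv j g) :=
    contDiff_partialDeriv hg one_add_one_eq_two.le j
  have h := integral_divergence_eq_zero (fun j => hf.mul (hg' j))
    (fun j => hfper.mul (hgper.partialDeriv j))
  simp only [divergence_mul_grad (hf.differentiable one_ne_zero _)
    fun j => (hg' j).differentiable one_ne_zero _] at h
  rw [integral_add (integrableOn_unitCube (hf.continuous.fun_mul (continuous_laplacian hg)))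
    (integrableOn_unitCube (continuous_finsetSum _ fun j _ =>
      (continuous_partialDeriv hf j).fun_mul (hg' j).continuous))] at h
  exact eq_neg_of_add_eq_zero_left h

/-- The inner product `∫ v · w + α² ∫ ∇v : ∇w` over the period cell, polarizing `voigtEnergy`. -/
noncomputable def voigtInner (α : ℝ) (v w : Fin d → (Fin d → ℝ) → ℝ) : ℝ :=
  (∫ x in unitCube d, ∑ i, v i x * w i x)
    + α ^ 2 * ∫ x in unitCube d, ∑ i, ∑ j, partialDeriv j (v i) x * partialDeriv j (w i) x

/-- The Voigt energy `‖v‖² + α² ‖∇v‖²`, with `L²` norms over the period cell. -/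
noncomputable def voigtEnergy (α : ℝ) (v : Fin d → (Fin d → ℝ) → ℝ) : ℝ :=
  (∫ x in unitCube d, ∑ i, v i x ^ 2)
    + α ^ 2 * ∫ x in unitCube d, ∑ i, ∑ j, partialDeriv j (v i) x ^ 2

lemma integral_sum_sq_le_voigtEnergy (α : ℝ) (v : Fin d → (Fin d → ℝ) → ℝ) :
    ∫ x in unitCube d, ∑ i, v i x ^ 2 ≤ voigtEnergy α v :=
  le_add_of_nonneg_right <| mul_nonneg (sq_nonneg α) <| integral_nonneg fun _ =>
    Finset.sum_nonneg fun _ _ => Finset.sum_nonneg fun _ _ => sq_nonneg _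

lemma voigtInner_eq_sum (α : ℝ) (hv : ∀ i, ContDiff ℝ 1 (v i)) (hvper : ∀ i, UnitPeriodic (v i))
    (hw : ∀ i, ContDiff ℝ 2 (w i)) (hwper : ∀ i, UnitPeriodic (w i)) :
    voigtInner α v w
      = ∑ i, ∫ x in unitCube d, v i x * (w i x - α ^ 2 * laplacian (w i) x) := by
  have hvw (i : Fin d) : Continuous fun x => v i x * w i x :=
    (hv i).continuous.mul (hw i).continuous
  have hgrad (i : Fin d) :
      Continuous fun x => ∑ j, partialDeriv j (v i) x * partialDeriv j (w i) x :=
    continuous_finsetSum _ fun j _ => (continuous_partialDeriv (hv i) j).mul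
      (continuous_partialDeriv ((hw i).of_le one_le_two) j)
  have hlap (i : Fin d) : Continuous fun x => α ^ 2 * (v i x * laplacian (w i) x) :=
    continuous_const.mul ((hv i).continuous.mul (continuous_laplacian (hw i)))
  rw [voigtInner, integral_finsetSum _ fun i _ => integrableOn_unitCube (hvw i),
    integral_finsetSum _ fun i _ => integrableOn_unitCube (hgrad i), Finset.mul_sum,
    ← Finset.sum_add_distrib]
  refine Finset.sum_congr rfl fun i _ => ?_
  simp only [mul_sub, mul_left_comm (v i _)]
  rw [integral_sub (integrableOn_unitCube (hvw i)) (integrableOn_unitCube (hlap i)),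
    integral_const_mul, integral_mul_laplacian (hv i) (hvper i) (hw i) (hwper i)]
  ring

lemma voigtInner_eq_integral_force {α : ℝ} {F : Fin d → (Fin d → ℝ) → ℝ}
    (hv : ∀ i, ContDiff ℝ 1 (v i)) (hvper : ∀ i, UnitPeriodic (v i))
    (hdiv : ∀ x, divergence v x = 0) (hw : ∀ i, ContDiff ℝ 2 (w i))
    (hwper : ∀ i, UnitPeriodic (w i)) (hp : ContDiff ℝ 1 p) (hpper : UnitPeriodic p)
    (hmom : ∀ x i, w i x - α ^ 2 * laplacian (w i) x + advection v (v i) x + partialDeriv i p x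
      = F i x) :
    voigtInner α v w = ∫ x in unitCube d, ∑ i, F i x * v i x := by
  have hvisc (i : Fin d) : Continuous fun x => v i x * (w i x - α ^ 2 * laplacian (w i) x) :=
    (hv i).continuous.mul ((hw i).continuous.sub
      (continuous_const.mul (continuous_laplacian (hw i))))
  have hconv (i : Fin d) : Continuous fun x => v i x * advection v (v i) x :=
    (hv i).continuous.mul (continuous_advection (fun j => (hv j).continuous) (hv i))
  have hwork (x : Fin d → ℝ) : ∑ i, F i x * v i x
      = ∑ i, (v i x * (w i x - α ^ 2 * laplacian (w i) x) + v i x * advection v (v i) x)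
        + advection v p x := by
    rw [advection, ← Finset.sum_add_distrib]
    exact Finset.sum_congr rfl fun i _ => by rw [← hmom]; ring
  simp only [hwork]
  rw [integral_add (integrableOn_unitCube (continuous_finsetSum _ fun i _ =>
      (hvisc i).fun_add (hconv i)))
      (integrableOn_unitCube (continuous_advection (fun j => (hv j).continuous) hp)),
    integral_advection_eq_zero hv hvper hdiv hp hpper, add_zero,
    integral_finsetSum _ fun i _ => integrableOn_unitCube ((hvisc i).fun_add (hconv i)),
    voigtInner_eq_sum α hv hvper hw hwper]
  refine Finset.sum_congr rfl fun i _ => ?_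
  rw [integral_add (integrableOn_unitCube (hvisc i)) (integrableOn_unitCube (hconv i)),
    integral_mul_advection_self_eq_zero hv hvper hdiv (hv i) (hvper i), add_zero]

end PeriodCell

section TimeDependentFields

variable {d : ℕ} {f : ℝ → (Fin d → ℝ) → ℝ} {m n : WithTop ℕ∞}

/-- The time derivative `∂ₜ f`, again as a time-dependent scalar field. -/
noncomputable def timeDeriv (f : ℝ → (Fin d → ℝ) → ℝ) (t : ℝ) (x : Fin d → ℝ) : ℝ :=
  deriv (fun s => f s x) t

lemma contDiff_slice (hf : ContDiff ℝ n (uncurry f)) (t : ℝ) : ContDiff ℝ n (f t) :=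
  hf.comp (contDiff_prodMk_right t)

lemma hasDerivAt_timeDeriv (hf : ContDiff ℝ 1 (uncurry f)) (t : ℝ) (x : Fin d → ℝ) :
    HasDerivAt (fun s => f s x) (timeDeriv f t x) t :=
  ((hf.comp (contDiff_prodMk_left x)).differentiable one_ne_zero t).hasDerivAt

lemma timeDeriv_eq_fderiv_uncurry (hf : ContDiff ℝ 1 (uncurry f)) (t : ℝ) (x : Fin d → ℝ) :
    timeDeriv f t x = fderiv ℝ (uncurry f) (t, x) (1, 0) := by
  have h := (hf.differentiable one_ne_zero (t, x)).hasFDerivAt.comp t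
    (hasFDerivAt_prodMk_left (𝕜 := ℝ) t x)
  exact h.hasDerivAt.deriv.trans (by simp)

lemma partialDeriv_eq_fderiv_uncurry (hf : ContDiff ℝ 1 (uncurry f)) (j : Fin d) (t : ℝ)
    (x : Fin d → ℝ) :
    partialDeriv j (f t) x = fderiv ℝ (uncurry f) (t, x) (0, Pi.single j 1) := by
  have h := (hf.differentiable one_ne_zero (t, x)).hasFDerivAt.comp x
    (hasFDerivAt_prodMk_right (𝕜 := ℝ) t x)
  exact (DFunLike.congr_fun h.fderiv (Pi.single j 1)).trans (by simp)

lemma contDiff_uncurry_timeDeriv (hf : ContDiff ℝ m (uncurry f)) (hnm : n + 1 ≤ m) :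
    ContDiff ℝ n (uncurry (timeDeriv f)) := by
  have hf1 := hf.of_le (le_add_self.trans hnm)
  have : uncurry (timeDeriv f) = fun q => fderiv ℝ (uncurry f) q (1, 0) :=
    funext fun q => timeDeriv_eq_fderiv_uncurry hf1 q.1 q.2
  exact this ▸ (hf.fderiv_right hnm).clm_apply contDiff_const

lemma contDiff_uncurry_partialDeriv (hf : ContDiff ℝ m (uncurry f)) (hnm : n + 1 ≤ m)
    (j : Fin d) : ContDiff ℝ n (uncurry fun t => partialDeriv j (f t)) := by
  have hf1 := hf.of_le (le_add_self.trans hnm)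
  have : (uncurry fun t => partialDeriv j (f t))
      = fun q => fderiv ℝ (uncurry f) q (0, Pi.single j 1) :=
    funext fun q => partialDeriv_eq_fderiv_uncurry hf1 j q.1 q.2
  exact this ▸ (hf.fderiv_right hnm).clm_apply contDiff_const

lemma fderiv_fderiv_apply_comm {E : Type*} [NormedAddCommGroup E] [NormedSpace ℝ E] {G : E → ℝ}
    (hG : ContDiff ℝ 2 G) (q a b : E) :
    fderiv ℝ (fun q => fderiv ℝ G q a) q b = fderiv ℝ (fun q => fderiv ℝ G q b) q a := by
  have hG' : DifferentiableAt ℝ (fderiv ℝ G) q :=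
    (hG.fderiv_right one_add_one_eq_two.le).differentiable one_ne_zero q
  have hsymm : IsSymmSndFDerivAt ℝ G q := hG.contDiffAt.isSymmSndFDerivAt (by simp)
  simpa [fderiv_clm_apply hG' (differentiableAt_const _)] using hsymm.eq b a

lemma timeDeriv_partialDeriv (hf : ContDiff ℝ 2 (uncurry f)) (j : Fin d) (t : ℝ) :
    timeDeriv (fun s => partialDeriv j (f s)) t = partialDeriv j (timeDeriv f t) := by
  ext x
  have hf1 := hf.of_le one_le_two
  rw [timeDeriv_eq_fderiv_uncurry (contDiff_uncurry_partialDeriv hf one_add_one_eq_two.le j),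
    partialDeriv_eq_fderiv_uncurry (contDiff_uncurry_timeDeriv hf one_add_one_eq_two.le)]
  simp only [Function.uncurry_def, timeDeriv_eq_fderiv_uncurry hf1,
    partialDeriv_eq_fderiv_uncurry hf1]
  exact fderiv_fderiv_apply_comm hf _ _ _

lemma hasDerivAt_laplacian (hf : ContDiff ℝ 3 (uncurry f)) (t : ℝ) (x : Fin d → ℝ) :
    HasDerivAt (fun s => laplacian (f s) x) (laplacian (timeDeriv f t) x) t := by
  refine HasDerivAt.fun_sum fun j _ => ?_
  have hj : ContDiff ℝ 2 (uncurry fun s => partialDeriv j (f s)) :=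
    contDiff_uncurry_partialDeriv hf (by norm_num) j
  rw [← timeDeriv_partialDeriv (hf.of_le (by norm_num)), ← timeDeriv_partialDeriv hj]
  exact hasDerivAt_timeDeriv (contDiff_uncurry_partialDeriv hj one_add_one_eq_two.le j) t x

lemma deriv_sub_const_mul_laplacian (hf : ContDiff ℝ 3 (uncurry f)) (c t : ℝ) (x : Fin d → ℝ) :
    deriv (fun s => f s x - c * laplacian (f s) x) t
      = timeDeriv f t x - c * laplacian (timeDeriv f t) x :=
  ((hasDerivAt_timeDeriv (hf.of_le (by norm_num)) t x).sub
    ((hasDerivAt_laplacian hf t x).const_mul c)).deriv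

lemma UnitPeriodic.timeDeriv (hf : ∀ t, UnitPeriodic (f t)) (t : ℝ) :
    UnitPeriodic (timeDeriv f t) :=
  fun j x => by simp only [_root_.timeDeriv, hf _ j x]

lemma hasDerivAt_integral_sum_sq {ι : Type*} [Fintype ι] {g : ι → ℝ → (Fin d → ℝ) → ℝ}
    (hg : ∀ i, ContDiff ℝ 1 (uncurry (g i))) (t : ℝ) :
    HasDerivAt (fun s => ∫ x in unitCube d, ∑ i, g i s x ^ 2)
      (2 * ∫ x in unitCube d, ∑ i, g i t x * timeDeriv (g i) t x) t := by
  have hcont : Continuous (uncurry fun s x => 2 * ∑ i, g i s x * timeDeriv (g i) s x) :=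
    continuous_const.mul (continuous_finsetSum _ fun i _ => (hg i).continuous.mul
      (contDiff_uncurry_timeDeriv (hg i) (zero_add 1).le).continuous)
  rw [← integral_const_mul]
  refine hasDerivAt_setIntegral_of_isCompact isCompact_unitCube
    (fun s => continuous_finsetSum _ fun i _ => (contDiff_slice (hg i) s).continuous.pow 2) hcont
    (fun s x => ?_) t
  simp only [Finset.mul_sum]
  refine HasDerivAt.fun_sum fun i _ => ?_
  simpa [mul_assoc] using (hasDerivAt_timeDeriv (hg i) s x).fun_pow 2

lemma hasDerivAt_voigtEnergy {u : Fin d → ℝ → (Fin d → ℝ) → ℝ}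
    (hu : ∀ i, ContDiff ℝ 2 (uncurry (u i))) (α t : ℝ) :
    HasDerivAt (fun s => voigtEnergy α fun i => u i s)
      (2 * voigtInner α (fun i => u i t) fun i => timeDeriv (u i) t) t := by
  have hL2 := hasDerivAt_integral_sum_sq (fun i => (hu i).of_le one_le_two) t
  have hgrad := hasDerivAt_integral_sum_sq (fun ij : Fin d × Fin d =>
    contDiff_uncurry_partialDeriv (hu ij.1) one_add_one_eq_two.le ij.2) t
  simp only [Fintype.sum_prod_type, timeDeriv_partialDeriv (hu _)] at hgrad
  refine (hL2.fun_add (hgrad.const_mul (α ^ 2))).congr_deriv ?_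
  rw [voigtInner]
  ring

end TimeDependentFields

section BalanceLaws

variable {d : ℕ} {T : ℝ} {u : Fin d → ℝ → (Fin d → ℝ) → ℝ} {θ p : ℝ → (Fin d → ℝ) → ℝ}

lemma integral_sq_eq_of_transport (hu : ∀ i t, ContDiff ℝ 1 (u i t))
    (huper : ∀ i t, UnitPeriodic (u i t)) (hθ : ContDiff ℝ 1 (uncurry θ))
    (hθper : ∀ t, UnitPeriodic (θ t))
    (hdiv : ∀ t ∈ Set.Icc 0 T, ∀ x, divergence (fun j => u j t) x = 0)
    (htransport : ∀ t ∈ Set.Icc 0 T, ∀ x,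
      timeDeriv θ t x + advection (fun j => u j t) (θ t) x = 0) :
    ∀ t ∈ Set.Icc 0 T, ∫ x in unitCube d, θ t x ^ 2 = ∫ x in unitCube d, θ 0 x ^ 2 := by
  have hderiv (t : ℝ) : HasDerivAt (fun s => ∫ x in unitCube d, θ s x ^ 2)
      (2 * ∫ x in unitCube d, θ t x * timeDeriv θ t x) t := by
    simpa using hasDerivAt_integral_sum_sq (fun _ : Unit => hθ) t
  refine constant_of_has_deriv_right_zero
    (fun t _ => (hderiv t).continuousAt.continuousWithinAt) fun t ht => ?_
  have ht' := Set.Ico_subset_Icc_self ht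
  have hzero : ∫ x in unitCube d, θ t x * timeDeriv θ t x = 0 := by
    simp only [eq_neg_of_add_eq_zero_left (htransport t ht' _), mul_neg, integral_neg, neg_eq_zero]
    exact integral_mul_advection_self_eq_zero (fun j => hu j t) (fun j => huper j t) (hdiv t ht')
      (contDiff_slice hθ t) (hθper t)
  simpa [hzero] using (hderiv t).hasDerivWithinAt

lemma sqrt_voigtEnergy_le_of_force {α c : ℝ} {F : Fin d → ℝ → (Fin d → ℝ) → ℝ}
    (hu : ∀ i, ContDiff ℝ 3 (uncurry (u i))) (huper : ∀ i t, UnitPeriodic (u i t))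
    (hp : ∀ t, ContDiff ℝ 1 (p t)) (hpper : ∀ t, UnitPeriodic (p t))
    (hF : ∀ i t, Continuous (F i t))
    (hdiv : ∀ t ∈ Set.Icc 0 T, ∀ x, divergence (fun j => u j t) x = 0)
    (hmom : ∀ t ∈ Set.Icc 0 T, ∀ x i,
      deriv (fun s => u i s x - α ^ 2 * laplacian (u i s) x) t
        + advection (fun j => u j t) (u i t) x + partialDeriv i (p t) x = F i t x)
    (hc : 0 ≤ c) (hFc : ∀ t ∈ Set.Icc 0 T, √(∫ x in unitCube d, ∑ i, F i t x ^ 2) ≤ c) :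
    ∀ t ∈ Set.Icc 0 T,
      √(voigtEnergy α fun i => u i t) ≤ √(voigtEnergy α fun i => u i 0) + t * c := by
  intro t ht
  have hslice (i : Fin d) (s : ℝ) : ContDiff ℝ 3 (u i s) := contDiff_slice (hu i) s
  have hbalance (s : ℝ) (hs : s ∈ Set.Icc 0 T) :
      voigtInner α (fun i => u i s) (fun i => timeDeriv (u i) s)
        = ∫ x in unitCube d, ∑ i, F i s x * u i s x :=
    voigtInner_eq_integral_force (fun i => (hslice i s).of_le (by norm_num)) (fun i => huper i s)
      (hdiv s hs) (fun i => contDiff_slice (contDiff_uncurry_timeDeriv (hu i) (by norm_num)) s)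
      (fun i => UnitPeriodic.timeDeriv (huper i) s) (hp s) (hpper s)
      fun x i => by rw [← deriv_sub_const_mul_laplacian (hu i), hmom s hs]
  have hpower (s : ℝ) (hs : s ∈ Set.Icc 0 T) :
      voigtInner α (fun i => u i s) (fun i => timeDeriv (u i) s)
        ≤ c * √(voigtEnergy α fun i => u i s) :=
    calc voigtInner α (fun i => u i s) (fun i => timeDeriv (u i) s)
        = ∫ x in unitCube d, ∑ i, F i s x * u i s x := hbalance s hs
      _ ≤ √(∫ x in unitCube d, ∑ i, F i s x ^ 2) * √(∫ x in unitCube d, ∑ i, u i s x ^ 2) :=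
          integral_sum_mul_le_sqrt_mul_sqrt (fun i => memLp_two_unitCube (hF i s))
            (fun i => memLp_two_unitCube (hslice i s).continuous)
      _ ≤ c * √(voigtEnergy α fun i => u i s) :=
          mul_le_mul (hFc s hs) (Real.sqrt_le_sqrt (integral_sum_sq_le_voigtEnergy α _))
            (Real.sqrt_nonneg _) hc
  simpa using sqrt_le_add_mul_of_deriv_le hc
    (fun s _ => hasDerivAt_voigtEnergy (fun i => (hu i).of_le (by norm_num)) α s)
    (fun s hs => mul_le_mul_of_nonneg_left (hpower s hs) zero_le_two) ht

end BalanceLaws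

theorem stmt14_general {d : ℕ} {T α : ℝ} {u : Fin d → ℝ → (Fin d → ℝ) → ℝ}
    {θ p : ℝ → (Fin d → ℝ) → ℝ} (e : Fin d → ℝ) (hu : ∀ i, ContDiff ℝ 3 (uncurry (u i)))
    (hθ : ContDiff ℝ 1 (uncurry θ)) (hp : ∀ t, ContDiff ℝ 1 (p t))
    (huper : ∀ i t, UnitPeriodic (u i t)) (hθper : ∀ t, UnitPeriodic (θ t))
    (hpper : ∀ t, UnitPeriodic (p t))
    (hdiv : ∀ t ∈ Set.Icc 0 T, ∀ x, divergence (fun j => u j t) x = 0)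
    (hmom : ∀ t ∈ Set.Icc 0 T, ∀ x i,
      deriv (fun s => u i s x - α ^ 2 * laplacian (u i s) x) t
        + advection (fun j => u j t) (u i t) x + partialDeriv i (p t) x = θ t x * e i)
    (htransport : ∀ t ∈ Set.Icc 0 T, ∀ x,
      timeDeriv θ t x + advection (fun j => u j t) (θ t) x = 0) :
    ∀ t ∈ Set.Icc 0 T, √(voigtEnergy α fun i => u i t)
      ≤ √(voigtEnergy α fun i => u i 0)
        + t * (√(∫ x in unitCube d, θ 0 x ^ 2) * √(∑ i, e i ^ 2)) := by
  refine sqrt_voigtEnergy_le_of_force (F := fun i t x => θ t x * e i) hu huper hp hpper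
    (fun i t => (contDiff_slice hθ t).continuous.mul continuous_const) hdiv hmom (by positivity)
    fun t ht => ?_
  have hconserved := integral_sq_eq_of_transport
    (fun i t => (contDiff_slice (hu i) t).of_le (by norm_num)) huper hθ hθper hdiv htransport t ht
  simp only [mul_pow, ← Finset.mul_sum, integral_mul_const, hconserved]
  rw [Real.sqrt_mul (integral_nonneg fun x => sq_nonneg _)]

lemma Periodic2.unitPeriodic {f : (Fin 2 → ℝ) → ℝ} (hf : Periodic2 f) : UnitPeriodic f := by
  intro j x
  rw [← hf x (Pi.single j 1)]
  congr 2 with i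
  simp [Pi.single_apply]

theorem stmt14
    (T α : ℝ) (hT : 0 < T) (hα : 0 < α)
    (u : ℝ → (Fin 2 → ℝ) → (Fin 2 → ℝ)) (θ p : ℝ → (Fin 2 → ℝ) → ℝ)
    (hu : ContDiff ℝ (⊤ : ℕ∞) (fun q : ℝ × (Fin 2 → ℝ) => u q.1 q.2))
    (hθ : ContDiff ℝ (⊤ : ℕ∞) (fun q : ℝ × (Fin 2 → ℝ) => θ q.1 q.2))
    (hp : ContDiff ℝ (⊤ : ℕ∞) (fun q : ℝ × (Fin 2 → ℝ) => p q.1 q.2))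
    (hup : ∀ t i, Periodic2 (fun x => u t x i))
    (hθp : ∀ t, Periodic2 (θ t)) (hpp : ∀ t, Periodic2 (p t))
    (hdiv : ∀ t x, ∑ j : Fin 2, pd j (fun y => u t y j) x = 0)
    (hmom : ∀ t ∈ Set.Icc (0 : ℝ) T, ∀ x, ∀ i : Fin 2,
      deriv (fun s => u s x i - α ^ 2 * lap (fun y => u s y i) x) t
          + (∑ j : Fin 2, u t x j * pd j (fun y => u t y i) x) + pd i (p t) x
        = θ t x * e2 i)
    (htheta : ∀ t ∈ Set.Icc (0 : ℝ) T, ∀ x,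
      deriv (fun s => θ s x) t + ∑ j : Fin 2, u t x j * pd j (θ t) x = 0) :
    ∀ t ∈ Set.Icc (0 : ℝ) T,
      Real.sqrt ((∫ x in Q2, ∑ i : Fin 2, (u t x i) ^ 2)
          + α ^ 2 * ∫ x in Q2, ∑ i : Fin 2, ∑ j : Fin 2, (pd j (fun y => u t y i) x) ^ 2)
        ≤ Real.sqrt ((∫ x in Q2, ∑ i : Fin 2, (u 0 x i) ^ 2)
            + α ^ 2 * ∫ x in Q2, ∑ i : Fin 2, ∑ j : Fin 2, (pd j (fun y => u 0 y i) x) ^ 2)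
          + t * Real.sqrt (∫ x in Q2, (θ 0 x) ^ 2) := by
  have he2 : √(∑ i, e2 i ^ 2) = 1 := by simp [e2]
  have hbound := stmt14_general (u := fun i t x => u t x i) e2
    (fun i => (contDiff_pi.1 hu i).of_le (WithTop.coe_le_coe.2 le_top)) (hθ.of_le (by simp))
    (fun t => contDiff_slice (hp.of_le (by simp)) t) (fun i t => (hup t i).unitPeriodic)
    (fun t => (hθp t).unitPeriodic) (fun t => (hpp t).unitPeriodic) (fun t _ => hdiv t) hmom htheta
  rw [he2, mul_one] at hbound
  exact hbound
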